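/- Let a, b be coprime integers with b(a²−4b) ≠ 0, and let E_{a,b} be the elliptic curve y² = x³ + ax² + bx over ℚ. Suppose there exists a prime p dividing a²−4b with the following property: for every nonzero squarefree integer d (of either sign) such that p ∣ d and every prime factor of d divides a²−4b, there exists a prime ℓ dividing 2b(a²−4b) such that the equation z² = d·u⁴ − 2a·u²v² + ((a²−4b)/d)·v⁴ has no solution (z,u,v) ∈ ℚ_ℓ³ with (u,v) ≠ (0,0). Then rank(E_{a,b}(ℚ)) ≤ ω(a²−4b) + ω(b) − 1. -/

import Mathlib

open TensorProduct

/-- The elliptic curve `y² = x³ + ax² + bx` over `ℚ`. -/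
noncomputable def Eab (a b : ℤ) : WeierstrassCurve.Affine ℚ :=
  { a₁ := 0, a₂ := (a : ℚ), a₃ := 0, a₄ := (b : ℚ), a₆ := 0 }

/-- The Mordell–Weil rank of a Weierstrass curve over `ℚ`: the dimension of the
`ℚ`-vector space `E(ℚ) ⊗_ℤ ℚ`. -/
noncomputable def mwRank (W : WeierstrassCurve.Affine ℚ) : Cardinal :=
  Module.rank ℚ (ℚ ⊗[ℤ] W.Point)

/-- The homogeneous space `z² = d·u⁴ − 2a·u²v² + ((a²−4b)/d)·v⁴` has no nontrivial
`ℚ_ℓ`-point. -/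
def NoLocalSolution (ℓ : ℕ) (hℓ : ℓ.Prime) (a b d : ℤ) : Prop :=
  haveI : Fact ℓ.Prime := ⟨hℓ⟩
  ¬ ∃ z u v : ℚ_[ℓ], (u, v) ≠ (0, 0) ∧
    z ^ 2 = (d : ℚ_[ℓ]) * u ^ 4 - 2 * (a : ℚ_[ℓ]) * u ^ 2 * v ^ 2 +
      (((a ^ 2 - 4 * b) / d : ℤ) : ℚ_[ℓ]) * v ^ 4

/-- The number of distinct prime factors of a nonzero integer. -/
def omega (n : ℤ) : ℕ := n.natAbs.primeFactors.card


namespace MWDescent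


theorem aux_index_two_pi (n : ℕ) :
    (nsmulAddMonoidHom (α := Fin n → ℤ) 2).range.index = 2 ^ n := by
  have : (nsmulAddMonoidHom (α := Fin n → ℤ) 2).range =
      AddSubgroup.pi Set.univ (fun _ : Fin n => AddSubgroup.zmultiples (2 : ℤ)) := by
    ext f
    simp only [AddMonoidHom.mem_range, AddSubgroup.mem_pi, Int.mem_zmultiples_iff,
      nsmulAddMonoidHom_apply, Set.mem_univ, true_imp_iff]
    constructor
    · rintro ⟨g, rfl⟩ i
      exact ⟨g i, by simp⟩
    · intro h
      choose g hg using h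
      exact ⟨g, by ext i; simp [hg i]⟩
  rw [this, AddSubgroup.index_pi]
  simp

theorem aux_index_two_prod (n : ℕ) (T : Type*) [AddCommGroup T] [Finite T] :
    (nsmulAddMonoidHom (α := (Fin n → ℤ) × T) 2).range.index =
      2 ^ n * Nat.card (nsmulAddMonoidHom (α := (Fin n → ℤ) × T) 2).ker := by
  have h1 : (nsmulAddMonoidHom (α := (Fin n → ℤ) × T) 2).range =
      (nsmulAddMonoidHom (α := Fin n → ℤ) 2).range.prod (nsmulAddMonoidHom (α := T) 2).range := by
    ext ⟨x, y⟩
    simp only [AddMonoidHom.mem_range, AddSubgroup.mem_prod, nsmulAddMonoidHom_apply]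
    constructor
    · rintro ⟨⟨u, v⟩, h⟩
      simp only [Prod.smul_mk, Prod.mk.injEq] at h
      exact ⟨⟨u, h.1⟩, ⟨v, h.2⟩⟩
    · rintro ⟨⟨u, hu⟩, ⟨v, hv⟩⟩
      exact ⟨(u, v), by simp only [Prod.smul_mk]; rw [hu, hv]⟩
  have h2 : (nsmulAddMonoidHom (α := (Fin n → ℤ) × T) 2).ker =
      (⊥ : AddSubgroup (Fin n → ℤ)).prod (nsmulAddMonoidHom (α := T) 2).ker := by
    ext ⟨x, y⟩
    simp only [AddMonoidHom.mem_ker, AddSubgroup.mem_prod, nsmulAddMonoidHom_apply, Prod.smul_mk,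
      Prod.mk_eq_zero, AddSubgroup.mem_bot, smul_eq_zero_iff_right (two_ne_zero' ℕ)]
  rw [h1, h2, AddSubgroup.index_prod, aux_index_two_pi, AddSubgroup.index_range]
  congr 1
  rw [Nat.card_congr (AddSubgroup.prodEquiv _ _).toEquiv, Nat.card_prod]
  simp

theorem aux_fg (A : Type) [AddCommGroup A] [AddGroup.FG A] :
    ∃ n : ℕ, Module.rank ℚ (ℚ ⊗[ℤ] A) = n ∧
    (nsmulAddMonoidHom (α := A) 2).range.index =
      2 ^ n * Nat.card (nsmulAddMonoidHom (α := A) 2).ker := by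
  classical
  obtain ⟨n, ι, _, p, hp, e, ⟨f⟩⟩ := AddCommGroup.equiv_free_prod_directSum_zmod A
  have : ∀ i, NeZero (p i ^ e i) := fun i => ⟨pow_ne_zero _ (hp i).ne_zero⟩
  let T := ∀ i, ZMod (p i ^ e i)
  let T' := DirectSum ι fun i => ZMod (p i ^ e i)
  let g : T' ≃+ T := DirectSum.addEquivProd _
  let k : A ≃+ (Fin n → ℤ) × T := f.trans
    ((Finsupp.linearEquivFunOnFinite ℤ ℤ (Fin n)).toAddEquiv.prodCongr g)
  have hr : (nsmulAddMonoidHom (α := A) 2).range.map k.toAddMonoidHom =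
      (nsmulAddMonoidHom (α := (Fin n → ℤ) × T) 2).range := by
    ext x
    simp only [AddSubgroup.mem_map, AddMonoidHom.mem_range, nsmulAddMonoidHom_apply]
    constructor
    · rintro ⟨_, ⟨y, rfl⟩, rfl⟩
      exact ⟨k y, by simp⟩
    · rintro ⟨y, rfl⟩
      exact ⟨_, ⟨k.symm y, rfl⟩, by simp⟩
  have hk : Nat.card (nsmulAddMonoidHom (α := A) 2).ker =
      Nat.card (nsmulAddMonoidHom (α := (Fin n → ℤ) × T) 2).ker := by
    refine Nat.card_congr (k.toEquiv.subtypeEquiv fun x => ?_)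
    simp only [AddMonoidHom.mem_ker, nsmulAddMonoidHom_apply]
    change _ ↔ 2 • k x = 0
    rw [← map_nsmul, EmbeddingLike.map_eq_zero_iff]
  have hI : (nsmulAddMonoidHom (α := A) 2).range.index =
      2 ^ n * Nat.card (nsmulAddMonoidHom (α := A) 2).ker := by
    rw [hk, ← aux_index_two_prod, ← hr]
    exact (AddSubgroup.index_map_equiv _ k).symm
  refine ⟨n, ?_, hI⟩
  · have h1 := IsLocalizedModule.lift_rank_eq (nonZeroDivisors ℤ)
      (TensorProduct.mk ℤ ℚ A 1) le_rfl
    rw [Cardinal.lift_id, Cardinal.lift_id] at h1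
    have h2 : Module.rank ℚ (ℚ ⊗[ℤ] A) = Module.rank ℤ A := by
      rw [IsLocalization.rank_eq (R := ℤ) ℚ (nonZeroDivisors ℤ) le_rfl, ← h1]
      congr 1
    rw [h2, k.toIntLinearEquiv.rank_eq]
    have hT : Module.rank ℤ T = 0 := by
      rw [rank_eq_zero_iff]
      intro x
      exact ⟨Nat.card T, by exact_mod_cast Nat.card_pos.ne', by
        rw [natCast_zsmul]; exact card_nsmul_eq_zero'⟩
    have hs := rank_quotient_add_rank_of_isDomain
      (LinearMap.ker (LinearMap.snd ℤ (Fin n → ℤ) T))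
    rw [((LinearMap.snd ℤ (Fin n → ℤ) T).quotKerEquivOfSurjective
      LinearMap.snd_surjective).rank_eq, hT, zero_add] at hs
    rw [← hs, LinearMap.ker_snd,
      ← (LinearEquiv.ofInjective _ (LinearMap.inl_injective (R := ℤ) (M := Fin n → ℤ) (M₂ := T))).rank_eq]
    simp

theorem aux_index_formula {A B : Type} [AddCommGroup A] [AddCommGroup B] (φ : A →+ B) (ψ : B →+ A)
    (h : ∀ x, ψ (φ x) = 2 • x) :
    (nsmulAddMonoidHom (α := A) 2).range.index = (φ.range ⊔ ψ.ker).index * ψ.range.index := by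
  rw [← AddSubgroup.index_map]
  congr 1
  ext x
  simp [AddSubgroup.mem_map, AddMonoidHom.mem_range, h]

theorem aux_rank {A B : Type} [AddCommGroup A] [AddCommGroup B] [AddGroup.FG A]
    (φ : A →+ B) (ψ : B →+ A)
    (h : ∀ x, ψ (φ x) = 2 • x) (h1 : 2 ≤ Nat.card φ.ker) (h2 : 2 ≤ Nat.card ψ.ker)
    (m n : ℕ) (hm : ψ.range.index ≤ 2 ^ m) (hn : φ.range.index ≤ 2 ^ n) :
    Module.rank ℚ (ℚ ⊗[ℤ] A) ≤ ((m + n - 2 : ℕ) : Cardinal) := by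
  obtain ⟨r, hr, hI⟩ := aux_fg A
  rw [hr]
  norm_cast
  rw [aux_index_formula φ ψ h] at hI
  have e1 := AddSubgroup.relIndex_mul_index (show φ.range ≤ φ.range ⊔ ψ.ker from le_sup_left)
  rw [AddSubgroup.relIndex_sup_left] at e1
  have e2 : Nat.card (φ.range ⊓ ψ.ker : AddSubgroup B) * φ.range.relIndex ψ.ker =
      Nat.card ψ.ker := by
    have := AddSubgroup.relIndex_mul_relIndex (⊥ : AddSubgroup B) (φ.range ⊓ ψ.ker) ψ.ker bot_le
      inf_le_right
    rwa [AddSubgroup.relIndex_bot_left, AddSubgroup.relIndex_bot_left,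
      AddSubgroup.inf_relIndex_right] at this
  have e3 : Nat.card (nsmulAddMonoidHom (α := A) 2).ker =
      Nat.card φ.ker * Nat.card (φ.range ⊓ ψ.ker : AddSubgroup B) := by
    have hK : (nsmulAddMonoidHom (α := A) 2).ker = ψ.ker.comap φ := by
      ext x; simp [AddMonoidHom.mem_ker, h]
    have hle : φ.ker ≤ ψ.ker.comap φ := fun x hx => by
      simp only [AddSubgroup.mem_comap, AddMonoidHom.mem_ker] at hx ⊢
      simp [hx]
    have := AddSubgroup.relIndex_mul_relIndex (⊥ : AddSubgroup A) φ.ker (ψ.ker.comap φ) bot_le hle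
    rw [AddSubgroup.relIndex_bot_left, AddSubgroup.relIndex_bot_left, AddSubgroup.relIndex_ker,
      AddSubgroup.map_comap_eq] at this
    rw [hK, ← this]
  set i1 := (φ.range ⊔ ψ.ker).index
  set i2 := φ.range.relIndex ψ.ker
  set c := Nat.card (φ.range ⊓ ψ.ker : AddSubgroup B)
  have key : 2 ^ r * (Nat.card φ.ker * Nat.card ψ.ker) = ψ.range.index * φ.range.index := by
    rw [← e1, ← e2]
    calc _ = (2 ^ r * (Nat.card φ.ker * c)) * i2 := by ring
      _ = (i1 * ψ.range.index) * i2 := by rw [hI, e3]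
      _ = _ := by ring
  have h4 : 2 ^ (r + 2) ≤ 2 ^ (m + n) := by
    calc 2 ^ (r + 2) = 2 ^ r * (2 * 2) := by ring
      _ ≤ 2 ^ r * (Nat.card φ.ker * Nat.card ψ.ker) := by gcongr
      _ = ψ.range.index * φ.range.index := key
      _ ≤ 2 ^ m * 2 ^ n := by gcongr
      _ = _ := by ring
  have := (Nat.pow_le_pow_iff_right (by norm_num : 1 < 2)).1 h4
  omega


open WeierstrassCurve WeierstrassCurve.Affine

/-- The curve `y² = x³ + ax² + bx` with rational coefficients. -/
def EC (a b : ℚ) : WeierstrassCurve.Affine ℚ :=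
  { a₁ := 0, a₂ := a, a₃ := 0, a₄ := b, a₆ := 0 }

theorem EC_equation {a b x y : ℚ} :
    (EC a b).Equation x y ↔ y ^ 2 = x ^ 3 + a * x ^ 2 + b * x := by
  rw [Affine.equation_iff]
  simp [EC]

theorem EC_delta (a b : ℚ) : (EC a b).Δ = 16 * b ^ 2 * (a ^ 2 - 4 * b) := by
  simp only [WeierstrassCurve.Δ, WeierstrassCurve.b₂, WeierstrassCurve.b₄, WeierstrassCurve.b₆,
    WeierstrassCurve.b₈, EC]
  ring

theorem EC_nonsing {a b x y : ℚ} (hD : b * (a ^ 2 - 4 * b) ≠ 0)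
    (h : y ^ 2 = x ^ 3 + a * x ^ 2 + b * x) : (EC a b).Nonsingular x y := by
  rw [← Affine.equation_iff_nonsingular_of_Δ_ne_zero]
  · exact EC_equation.2 h
  · rw [EC_delta]
    intro h0
    rcases mul_eq_zero.1 h0 with h1 | h1
    · apply hD
      have : b = 0 := by simpa using h1
      simp [this]
    · apply hD; simp [h1]

theorem EC_eq_of {a b x y : ℚ} (h : (EC a b).Nonsingular x y) :
    y ^ 2 = x ^ 3 + a * x ^ 2 + b * x := EC_equation.1 h.1

theorem EC_nonsing' {a b x y : ℚ} (h : (EC a b).Nonsingular x y) :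
    3 * x ^ 2 + 2 * a * x + b ≠ 0 ∨ y ≠ 0 := by
  have := h
  rw [Affine.nonsingular_iff] at this
  simp only [EC] at this
  rcases this.2 with h1 | h1
  · left; intro h2; apply h1; linear_combination -h2
  · right; intro h2; apply h1; rw [h2]; ring

theorem EC_negY (a b x y : ℚ) : (EC a b).negY x y = -y := by
  simp [Affine.negY, EC]

/-- Data of a line meeting the curve in three given points, with multiplicities. -/
def LineData (a b x₁ y₁ x₂ y₂ x₃ y₃ l n : ℚ) : Prop :=
  y₁ = l * x₁ + n ∧ y₂ = l * x₂ + n ∧ y₃ = l * x₃ + n ∧ x₁ + x₂ + x₃ = l ^ 2 - a ∧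
    x₁ * x₂ + x₁ * x₃ + x₂ * x₃ = b - 2 * l * n ∧ x₁ * x₂ * x₃ = n ^ 2

theorem EC_neg {a b x y : ℚ} (h : (EC a b).Nonsingular x y) (h' : (EC a b).Nonsingular x (-y)) :
    -(Point.some x y h) = Point.some x (-y) h' := by
  rw [Point.neg_some]
  simp only [EC_negY]

theorem EC_nonsing_neg {a b x y : ℚ} (h : (EC a b).Nonsingular x y) :
    (EC a b).Nonsingular x (-y) := by
  have := (Affine.nonsingular_neg x y).2 h
  rwa [EC_negY] at this

theorem EC_slope_spec {a b x₁ y₁ x₂ y₂ : ℚ} (h₁ : (EC a b).Nonsingular x₁ y₁)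
    (h₂ : (EC a b).Nonsingular x₂ y₂) (hxy : ¬(x₁ = x₂ ∧ y₁ = -y₂)) :
    ∃ l, (EC a b).slope x₁ x₂ y₁ y₂ = l ∧ y₁ - y₂ = l * (x₁ - x₂) ∧
      l * (y₁ + y₂) = x₁ ^ 2 + x₁ * x₂ + x₂ ^ 2 + a * (x₁ + x₂) + b := by
  have e1 := EC_eq_of h₁
  have e2 := EC_eq_of h₂
  by_cases hx : x₁ = x₂
  · subst hx
    have hy : y₁ ≠ -y₂ := fun h => hxy ⟨rfl, h⟩
    have hyy : y₁ = y₂ := by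
      have : (y₁ - y₂) * (y₁ + y₂) = 0 := by linear_combination e1 - e2
      rcases mul_eq_zero.1 this with h | h
      · linarith
      · exact absurd (by linarith) hy
    subst hyy
    have hy0 : y₁ ≠ 0 := fun h => hy (by rw [h]; simp)
    refine ⟨_, rfl, by ring, ?_⟩
    rw [Affine.slope_of_Y_ne rfl (by rwa [EC_negY])]
    rw [EC_negY]
    simp only [EC]
    have : y₁ - -y₁ ≠ 0 := by intro h; apply hy0; linarith
    field_simp
    ring
  · have hx' : x₁ - x₂ ≠ 0 := sub_ne_zero.2 hx
    refine ⟨_, rfl, ?_, ?_⟩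
    · rw [Affine.slope_of_X_ne hx]; field_simp
    · rw [Affine.slope_of_X_ne hx]; field_simp
      linear_combination e1 - e2

theorem line_of_sum_zero {a b x₁ y₁ x₂ y₂ x₃ y₃ : ℚ} (h₁ : (EC a b).Nonsingular x₁ y₁)
    (h₂ : (EC a b).Nonsingular x₂ y₂) (h₃ : (EC a b).Nonsingular x₃ y₃)
    (h : Point.some x₁ y₁ h₁ + Point.some x₂ y₂ h₂ + Point.some x₃ y₃ h₃ = 0) :
    ∃ l n, LineData a b x₁ y₁ x₂ y₂ x₃ y₃ l n := by
  have e1 := EC_eq_of h₁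
  have e2 := EC_eq_of h₂
  have h' := eq_neg_of_add_eq_zero_left h
  by_cases hxy : x₁ = x₂ ∧ y₁ = -y₂
  · rw [Point.add_of_Y_eq hxy.1 (by rw [EC_negY]; exact hxy.2)] at h'
    simp at h'
  · obtain ⟨l, hl, hl1, hl2⟩ := EC_slope_spec h₁ h₂ hxy
    rw [Point.add_some (by rwa [EC_negY]), Point.neg_some, Point.some.injEq, hl] at h'
    simp only [Affine.addX, Affine.addY, Affine.negAddY, EC_negY, neg_inj] at h'
    simp only [EC, zero_mul, add_zero] at h'
    obtain ⟨hx, hy⟩ := h'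
    rw [hx] at hy
    refine ⟨l, y₁ - l * x₁, by ring, by linear_combination -hl1, by linear_combination -hy,
      by linear_combination -hx, ?_, ?_⟩
    · subst hx
      linear_combination hl2 + l * hl1
    · subst hx
      linear_combination - e1 + x₁ * (hl2 + l * hl1)

theorem sum_zero_of_line {a b x₁ y₁ x₂ y₂ x₃ y₃ : ℚ} (h₁ : (EC a b).Nonsingular x₁ y₁)
    (h₂ : (EC a b).Nonsingular x₂ y₂) (h₃ : (EC a b).Nonsingular x₃ y₃) {l n : ℚ}
    (h : LineData a b x₁ y₁ x₂ y₂ x₃ y₃ l n) :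
    Point.some x₁ y₁ h₁ + Point.some x₂ y₂ h₂ + Point.some x₃ y₃ h₃ = 0 := by
  obtain ⟨H1, H2, H3, H4, H5, H6⟩ := h
  have hxy : ¬(x₁ = x₂ ∧ y₁ = -y₂) := by
    rintro ⟨rfl, hy⟩
    have hy0 : y₁ = 0 := by linarith
    have := EC_nonsing' h₁
    rw [hy0] at this
    simp only [ne_eq, not_true_eq_false, or_false] at this
    apply this
    have hn : n = - l * x₁ := by linarith
    have h3 : x₃ = l ^ 2 - a - 2 * x₁ := by linarith
    rw [hn, h3] at H5
    linear_combination - H5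
  obtain ⟨l', hl, hl1, hl2⟩ := EC_slope_spec h₁ h₂ hxy
  have hll : l' = l := by
    by_cases hx : x₁ = x₂
    · subst hx
      have hy : y₁ = y₂ := by linarith
      have hy0 : y₁ ≠ 0 := fun h => hxy ⟨rfl, by rw [← hy, h]; simp⟩
      have : (l' - l) * (2 * y₁) = 0 := by
        have h3 : x₃ = l ^ 2 - a - 2 * x₁ := by linarith
        rw [h3] at H5
        rw [← hy] at hl2
        linear_combination hl2 - H5 - 2 * l * H1
      rcases mul_eq_zero.1 this with h | h
      · linarith
      · exact absurd (by linarith) hy0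
    · have : (l' - l) * (x₁ - x₂) = 0 := by linear_combination -hl1 + H1 - H2
      rcases mul_eq_zero.1 this with h | h
      · linarith
      · exact absurd (by linarith) hx
  subst hll
  rw [add_eq_zero_iff_eq_neg]
  rw [Point.add_some (by rwa [EC_negY]), Point.neg_some, Point.some.injEq, hl]
  simp only [Affine.addX, Affine.addY, Affine.negAddY, EC_negY, neg_inj]
  simp only [EC, zero_mul, add_zero]
  have h3 : x₃ = l' ^ 2 - a - x₁ - x₂ := by linarith
  refine ⟨h3.symm, ?_⟩
  rw [← h3]
  linear_combination H1 - H3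

/-- A map that is odd and respects collinear triples is a homomorphism. -/
theorem hom_of_lines {a b : ℚ} {M : Type*} [AddCommGroup M] (f : (EC a b).Point → M)
    (h0 : f 0 = 0) (hneg : ∀ P, f (-P) = -f P)
    (hl : ∀ x₁ y₁ x₂ y₂ x₃ y₃ (h₁ : (EC a b).Nonsingular x₁ y₁)
      (h₂ : (EC a b).Nonsingular x₂ y₂) (h₃ : (EC a b).Nonsingular x₃ y₃) (l n : ℚ),
      LineData a b x₁ y₁ x₂ y₂ x₃ y₃ l n →
      f (.some x₁ y₁ h₁) + f (.some x₂ y₂ h₂) + f (.some x₃ y₃ h₃) = 0) (P Q : (EC a b).Point) :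
    f (P + Q) = f P + f Q := by
  have key : ∀ P Q R : (EC a b).Point, P + Q + R = 0 → f P + f Q + f R = 0 := by
    intro P Q R h
    rcases P with _ | ⟨x₁, y₁, h₁⟩
    · change (0 : (EC a b).Point) + Q + R = 0 at h
      change f 0 + f Q + f R = 0
      rw [zero_add] at h
      rw [eq_neg_of_add_eq_zero_left h, hneg, h0]; simp
    rcases Q with _ | ⟨x₂, y₂, h₂⟩
    · change _ + (0 : (EC a b).Point) + R = 0 at h
      change _ + f 0 + f R = 0
      rw [add_zero] at h
      rw [eq_neg_of_add_eq_zero_left h, hneg, h0]; simp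
    rcases R with _ | ⟨x₃, y₃, h₃⟩
    · change _ + (0 : (EC a b).Point) = 0 at h
      change _ + f 0 = 0
      rw [add_zero] at h
      rw [eq_neg_of_add_eq_zero_left h, hneg, h0]; simp
    obtain ⟨l, n, hln⟩ := line_of_sum_zero h₁ h₂ h₃ h
    exact hl _ _ _ _ _ _ h₁ h₂ h₃ l n hln
  have := key P Q (-(P + Q)) (by simp)
  rw [hneg] at this
  exact (eq_of_sub_eq_zero (by rw [sub_eq_add_neg]; exact this)).symm


/-- The standard `2`-isogeny (scaled by `c`). -/
noncomputable def isogFun (a b A B c : ℚ) (hA : A = -2 * a * c ^ 2)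
    (hB : B = c ^ 4 * (a ^ 2 - 4 * b)) (hD : B * (A ^ 2 - 4 * B) ≠ 0) :
    (EC a b).Point → (EC A B).Point
  | .zero => 0
  | .some x y h => if hx : x = 0 then 0 else
      .some (c ^ 2 * (y / x) ^ 2) (c ^ 3 * (y / x) * (x - b / x)) (EC_nonsing hD (by
        have e := EC_eq_of h
        subst hA hB
        have e2 : (y / x) ^ 2 = x + a + b / x := by
          field_simp; linear_combination e
        generalize y / x = m at e2
        obtain ⟨k, hk⟩ : ∃ k, b / x = k := ⟨_, rfl⟩
        have hb : b = k * x := by rw [← hk]; field_simp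
        rw [hk] at e2 ⊢
        have ha : a = m ^ 2 - x - k := by linear_combination -e2
        subst ha hb
        ring))

theorem isogFun_some {a b A B c : ℚ} (hA : A = -2 * a * c ^ 2)
    (hB : B = c ^ 4 * (a ^ 2 - 4 * b)) (hD : B * (A ^ 2 - 4 * B) ≠ 0) {x y : ℚ}
    (h : (EC a b).Nonsingular x y) (hx : x ≠ 0) :
    ∃ h', isogFun a b A B c hA hB hD (.some x y h) =
      .some (c ^ 2 * (y / x) ^ 2) (c ^ 3 * (y / x) * (x - b / x)) h' := by
  exact ⟨_, dif_neg hx⟩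

theorem isogFun_T {a b A B c : ℚ} (hA : A = -2 * a * c ^ 2)
    (hB : B = c ^ 4 * (a ^ 2 - 4 * b)) (hD : B * (A ^ 2 - 4 * B) ≠ 0) {x y : ℚ}
    (h : (EC a b).Nonsingular x y) (hx : x = 0) :
    isogFun a b A B c hA hB hD (.some x y h) = 0 := by
  simp only [isogFun, dif_pos hx]

theorem isogFun_neg {a b A B c : ℚ} (hA : A = -2 * a * c ^ 2)
    (hB : B = c ^ 4 * (a ^ 2 - 4 * b)) (hD : B * (A ^ 2 - 4 * B) ≠ 0) (P : (EC a b).Point) :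
    isogFun a b A B c hA hB hD (-P) = - isogFun a b A B c hA hB hD P := by
  rcases P with _ | ⟨x, y, h⟩
  · rfl
  · rw [EC_neg h (EC_nonsing_neg h)]
    by_cases hx : x = 0
    · rw [isogFun_T _ _ _ _ hx, isogFun_T _ _ _ _ hx, neg_zero]
    · obtain ⟨h1, e1⟩ := isogFun_some hA hB hD h hx
      obtain ⟨h2, e2⟩ := isogFun_some hA hB hD (EC_nonsing_neg h) hx
      rw [e1, e2, EC_neg _ (EC_nonsing_neg h1), Point.some.injEq]
      constructor <;> ring

theorem LineData.swap12 {a b x₁ y₁ x₂ y₂ x₃ y₃ l n : ℚ}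
    (h : LineData a b x₁ y₁ x₂ y₂ x₃ y₃ l n) : LineData a b x₂ y₂ x₁ y₁ x₃ y₃ l n := by
  obtain ⟨H1, H2, H3, H4, H5, H6⟩ := h
  exact ⟨H2, H1, H3, by linarith, by linarith, by linarith⟩

theorem LineData.swap13 {a b x₁ y₁ x₂ y₂ x₃ y₃ l n : ℚ}
    (h : LineData a b x₁ y₁ x₂ y₂ x₃ y₃ l n) : LineData a b x₃ y₃ x₂ y₂ x₁ y₁ l n := by
  obtain ⟨H1, H2, H3, H4, H5, H6⟩ := h
  exact ⟨H3, H2, H1, by linarith, by linarith, by linarith⟩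

theorem hom_of_lines' {a b : ℚ} {M : Type*} [AddCommGroup M] (f : (EC a b).Point → M)
    (h0 : f 0 = 0) (hneg : ∀ P, f (-P) = -f P) (hb : b ≠ 0)
    (hl0 : ∀ x₁ y₁ x₂ y₂ x₃ y₃ (h₁ : (EC a b).Nonsingular x₁ y₁)
      (h₂ : (EC a b).Nonsingular x₂ y₂) (h₃ : (EC a b).Nonsingular x₃ y₃) (l : ℚ),
      x₁ = 0 → y₁ = 0 → x₂ ≠ 0 → x₃ ≠ 0 → x₂ * x₃ = b → y₂ = l * x₂ → y₃ = l * x₃ →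
      f (.some x₁ y₁ h₁) + f (.some x₂ y₂ h₂) + f (.some x₃ y₃ h₃) = 0)
    (hl : ∀ x₁ y₁ x₂ y₂ x₃ y₃ (h₁ : (EC a b).Nonsingular x₁ y₁)
      (h₂ : (EC a b).Nonsingular x₂ y₂) (h₃ : (EC a b).Nonsingular x₃ y₃) (l n : ℚ),
      n ≠ 0 → x₁ ≠ 0 → x₂ ≠ 0 → x₃ ≠ 0 → LineData a b x₁ y₁ x₂ y₂ x₃ y₃ l n →
      f (.some x₁ y₁ h₁) + f (.some x₂ y₂ h₂) + f (.some x₃ y₃ h₃) = 0) (P Q : (EC a b).Point) :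
    f (P + Q) = f P + f Q := by
  refine hom_of_lines f h0 hneg ?_ P Q
  have hz : ∀ x₁ y₁ x₂ y₂ x₃ y₃ (h₁ : (EC a b).Nonsingular x₁ y₁)
      (h₂ : (EC a b).Nonsingular x₂ y₂) (h₃ : (EC a b).Nonsingular x₃ y₃) (l n : ℚ),
      x₁ = 0 → LineData a b x₁ y₁ x₂ y₂ x₃ y₃ l n →
      f (.some x₁ y₁ h₁) + f (.some x₂ y₂ h₂) + f (.some x₃ y₃ h₃) = 0 := by
    rintro x₁ y₁ x₂ y₂ x₃ y₃ h₁ h₂ h₃ l n hx ⟨H1, H2, H3, H4, H5, H6⟩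
    have hn : n = 0 := by
      rw [hx] at H6
      have : n ^ 2 = 0 := by linear_combination -H6
      simpa using this
    have hb' : x₂ * x₃ = b := by rw [hx, hn] at H5; linear_combination H5
    have : x₂ ≠ 0 ∧ x₃ ≠ 0 := by
      constructor <;> rintro rfl <;> apply hb <;> rw [← hb'] <;> ring
    exact hl0 _ _ _ _ _ _ h₁ h₂ h₃ l hx (by rw [H1, hx, hn]; ring) this.1 this.2 hb'
      (by rw [H2, hn]; ring) (by rw [H3, hn]; ring)
  intro x₁ y₁ x₂ y₂ x₃ y₃ h₁ h₂ h₃ l n h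
  by_cases hx1 : x₁ = 0
  · exact hz _ _ _ _ _ _ h₁ h₂ h₃ l n hx1 h
  by_cases hx2 : x₂ = 0
  · have := hz _ _ _ _ _ _ h₂ h₁ h₃ l n hx2 h.swap12
    rw [← this]; abel
  by_cases hx3 : x₃ = 0
  · have := hz _ _ _ _ _ _ h₃ h₂ h₁ l n hx3 h.swap13
    rw [← this]; abel
  refine hl _ _ _ _ _ _ h₁ h₂ h₃ l n ?_ hx1 hx2 hx3 h
  rintro rfl
  have := h.2.2.2.2.2
  simp [hx1, hx2, hx3] at this

/-- The isogeny as a homomorphism. -/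
noncomputable def isog (a b A B c : ℚ) (hb : b ≠ 0) (hA : A = -2 * a * c ^ 2)
    (hB : B = c ^ 4 * (a ^ 2 - 4 * b)) (hD : B * (A ^ 2 - 4 * B) ≠ 0) :
    (EC a b).Point →+ (EC A B).Point where
  toFun := isogFun a b A B c hA hB hD
  map_zero' := rfl
  map_add' := by
    refine hom_of_lines' _ rfl (isogFun_neg hA hB hD) hb ?_ ?_
    · intro x₁ y₁ x₂ y₂ x₃ y₃ h₁ h₂ h₃ l hx1 hy1 hx2 hx3 hxb hy2 hy3
      rw [isogFun_T _ _ _ _ hx1]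
      obtain ⟨g2, e2⟩ := isogFun_some hA hB hD h₂ hx2
      obtain ⟨g3, e3⟩ := isogFun_some hA hB hD h₃ hx3
      rw [e2, e3, zero_add, add_eq_zero_iff_eq_neg, EC_neg _ (EC_nonsing_neg g3), Point.some.injEq]
      subst hxb hy2 hy3
      constructor <;> field_simp <;> ring
    · intro x₁ y₁ x₂ y₂ x₃ y₃ h₁ h₂ h₃ l n hn hx1 hx2 hx3 hln
      obtain ⟨g1, e1⟩ := isogFun_some hA hB hD h₁ hx1
      obtain ⟨g2, e2⟩ := isogFun_some hA hB hD h₂ hx2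
      obtain ⟨g3, e3⟩ := isogFun_some hA hB hD h₃ hx3
      rw [e1, e2, e3]
      obtain ⟨H1, H2, H3, H4, H5, H6⟩ := hln
      refine sum_zero_of_line g1 g2 g3 (l := c * (l - b / n))
        (n := c ^ 3 * (n - a * l + b * l ^ 2 / n)) ?_
      obtain ⟨w₁, hw1⟩ : ∃ w, n / x₁ = w := ⟨_, rfl⟩
      obtain ⟨w₂, hw2⟩ : ∃ w, n / x₂ = w := ⟨_, rfl⟩
      obtain ⟨w₃, hw3⟩ : ∃ w, n / x₃ = w := ⟨_, rfl⟩
      have m1 : y₁ / x₁ = l + w₁ := by rw [H1, ← hw1]; field_simp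
      have m2 : y₂ / x₂ = l + w₂ := by rw [H2, ← hw2]; field_simp
      have m3 : y₃ / x₃ = l + w₃ := by rw [H3, ← hw3]; field_simp
      have x1 : x₁ = w₂ * w₃ := by rw [← hw2, ← hw3]; field_simp; linear_combination H6
      have x2 : x₂ = w₁ * w₃ := by rw [← hw1, ← hw3]; field_simp; linear_combination H6
      have x3 : x₃ = w₁ * w₂ := by rw [← hw1, ← hw2]; field_simp; linear_combination H6
      have hw1' : w₁ ≠ 0 := by rw [← hw1]; positivity
      have hw2' : w₂ ≠ 0 := by rw [← hw2]; positivity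
      have hw3' : w₃ ≠ 0 := by rw [← hw3]; positivity
      have hnn : n = w₁ * w₂ * w₃ := by
        rw [div_eq_iff hx1] at hw1; rw [hw1, x1]; ring
      have hbn : b / n = w₁ + w₂ + w₃ + 2 * l := by
        rw [div_eq_iff hn]
        have : b = 2 * l * n + (x₁ * x₂ + x₁ * x₃ + x₂ * x₃) := by linarith
        rw [this, x1, x2, x3, hnn]; ring
      have hb1 : b / x₁ = w₁ * (w₁ + w₂ + w₃ + 2 * l) := by
        rw [← hbn, ← hw1]; field_simp
      have hb2 : b / x₂ = w₂ * (w₁ + w₂ + w₃ + 2 * l) := by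
        rw [← hbn, ← hw2]; field_simp
      have hb3 : b / x₃ = w₃ * (w₁ + w₂ + w₃ + 2 * l) := by
        rw [← hbn, ← hw3]; field_simp
      have hbl : b * l ^ 2 / n = (w₁ + w₂ + w₃ + 2 * l) * l ^ 2 := by
        rw [← hbn]; ring
      have hbb : b = (w₁ + w₂ + w₃ + 2 * l) * (w₁ * w₂ * w₃) := by
        rw [← hbn, ← hnn]; field_simp
      have ha : a = l ^ 2 - (x₁ + x₂ + x₃) := by linarith
      rw [m1, m2, m3, hb1, hb2, hb3, hbl, hbn, hA, hB, hnn, ha, hbb, x1, x2, x3]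
      refine ⟨?_, ?_, ?_, ?_, ?_, ?_⟩ <;> ring

theorem isog_some {a b A B c : ℚ} (hb : b ≠ 0) (hA : A = -2 * a * c ^ 2)
    (hB : B = c ^ 4 * (a ^ 2 - 4 * b)) (hD : B * (A ^ 2 - 4 * B) ≠ 0) {x y : ℚ}
    (h : (EC a b).Nonsingular x y) (hx : x ≠ 0) :
    ∃ h', isog a b A B c hb hA hB hD (.some x y h) =
      .some (c ^ 2 * (y / x) ^ 2) (c ^ 3 * (y / x) * (x - b / x)) h' :=
  isogFun_some hA hB hD h hx

theorem isog_T {a b A B c : ℚ} (hb : b ≠ 0) (hA : A = -2 * a * c ^ 2)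
    (hB : B = c ^ 4 * (a ^ 2 - 4 * b)) (hD : B * (A ^ 2 - 4 * B) ≠ 0) {x y : ℚ}
    (h : (EC a b).Nonsingular x y) (hx : x = 0) :
    isog a b A B c hb hA hB hD (.some x y h) = 0 :=
  isogFun_T hA hB hD h hx

theorem isog_ker_card {a b A B c : ℚ} (hb : b ≠ 0) (hA : A = -2 * a * c ^ 2)
    (hB : B = c ^ 4 * (a ^ 2 - 4 * b)) (hD : B * (A ^ 2 - 4 * B) ≠ 0)
    (hD' : b * (a ^ 2 - 4 * b) ≠ 0) :
    2 ≤ Nat.card (isog a b A B c hb hA hB hD).ker := by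
  have hT : (EC a b).Nonsingular 0 0 := EC_nonsing hD' (by ring)
  have : ((isog a b A B c hb hA hB hD).ker : Set (EC a b).Point) = {0, .some 0 0 hT} := by
    ext P
    simp only [SetLike.mem_coe, AddMonoidHom.mem_ker, Set.mem_insert_iff, Set.mem_singleton_iff]
    rcases P with _ | ⟨x, y, h⟩
    · exact ⟨fun _ => .inl rfl, fun _ => rfl⟩
    · by_cases hx : x = 0
      · rw [isog_T _ _ _ _ _ hx]
        have hy : y = 0 := by
          have := EC_eq_of h
          rw [hx] at this
          simpa using this
        simp [hx, hy]
      · obtain ⟨h', e⟩ := isog_some hb hA hB hD h hx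
        rw [e]
        simp [hx]
  change 2 ≤ Nat.card ((isog a b A B c hb hA hB hD).ker : Set (EC a b).Point)
  rw [this, Nat.card_coe_set_eq, Set.ncard_pair (by simp)]

theorem isog_isog {a b A B : ℚ} (hb : b ≠ 0) (hA : A = -2 * a * 1 ^ 2)
    (hB : B = 1 ^ 4 * (a ^ 2 - 4 * b)) (hD : B * (A ^ 2 - 4 * B) ≠ 0) (hB' : B ≠ 0)
    (ha' : a = -2 * A * (1 / 2) ^ 2) (hb' : b = (1 / 2) ^ 4 * (A ^ 2 - 4 * B))
    (hD' : b * (a ^ 2 - 4 * b) ≠ 0) (P : (EC a b).Point) :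
    isog A B a b (1 / 2) hB' ha' hb' hD' (isog a b A B 1 hb hA hB hD P) = 2 • P := by
  rcases P with _ | ⟨x, y, h⟩
  · change isog A B a b (1 / 2) hB' ha' hb' hD' (isog a b A B 1 hb hA hB hD 0) =
      2 • (0 : (EC a b).Point)
    simp
  have e := EC_eq_of h
  by_cases hy : y = 0
  · have h2 : (2 : ℕ) • (Point.some x y h) = 0 := by
      rw [two_nsmul, add_eq_zero_iff_eq_neg, EC_neg _ (EC_nonsing_neg h), Point.some.injEq]
      simp [hy]
    rw [h2]
    by_cases hx : x = 0
    · rw [isog_T _ _ _ _ _ hx, map_zero]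
    · obtain ⟨h', e'⟩ := isog_some hb hA hB hD h hx
      rw [e', isog_T _ _ _ _ _ (by rw [hy]; simp)]
  · have hx : x ≠ 0 := by
      rintro rfl
      apply hy
      simpa using e
    obtain ⟨h', e'⟩ := isog_some hb hA hB hD h hx
    obtain ⟨hP2, eP2⟩ := isog_some hB' ha' hb' hD' h' (by positivity)
    rw [e', eP2]
    refine (sub_eq_zero.1 ?_).symm
    rw [sub_eq_add_neg, EC_neg _ (EC_nonsing_neg hP2), two_nsmul]
    refine sum_zero_of_line (l := (3 * x ^ 2 + 2 * a * x + b) / (2 * y))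
      (n := y - (3 * x ^ 2 + 2 * a * x + b) / (2 * y) * x) _ _ _ ?_
    have hbb : b = y ^ 2 / x - x ^ 2 - a * x := by field_simp; linear_combination -e
    clear e' eP2 hP2 h' ha' hb' hD hD' hA
    rw [hB]
    clear hB
    refine ⟨?_, ?_, ?_, ?_, ?_, ?_⟩
    · ring
    · ring
    all_goals
      rw [hbb]
      field_simp
      ring


/-- The descent map attached to a quadratic character-like function `χ`. -/
noncomputable def descFun {M : Type*} [AddCommGroup M] (χ : ℚ → M) (a b : ℚ) :
    (EC a b).Point → M
  | .zero => 0
  | .some x _ _ => if x = 0 then χ b else χ x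

theorem descFun_some {M : Type*} [AddCommGroup M] (χ : ℚ → M) {a b x y : ℚ}
    (h : (EC a b).Nonsingular x y) (hx : x ≠ 0) : descFun χ a b (.some x y h) = χ x :=
  if_neg hx

theorem descFun_T {M : Type*} [AddCommGroup M] (χ : ℚ → M) {a b x y : ℚ}
    (h : (EC a b).Nonsingular x y) (hx : x = 0) : descFun χ a b (.some x y h) = χ b :=
  if_pos hx

/-- The descent map as a homomorphism. -/
noncomputable def desc {M : Type*} [AddCommGroup M] (χ : ℚ → M)
    (hmul : ∀ x y, x ≠ 0 → y ≠ 0 → χ (x * y) = χ x + χ y) (h2 : ∀ m : M, m + m = 0)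
    (a b : ℚ) (hb : b ≠ 0) : (EC a b).Point →+ M where
  toFun := descFun χ a b
  map_zero' := rfl
  map_add' := by
    refine hom_of_lines' _ rfl ?_ hb ?_ ?_
    · intro P
      rw [eq_neg_iff_add_eq_zero]
      rcases P with _ | ⟨x, y, h⟩
      · exact h2 0
      · rw [EC_neg h (EC_nonsing_neg h)]
        exact h2 _
    · intro x₁ y₁ x₂ y₂ x₃ y₃ h₁ h₂ h₃ l hx1 hy1 hx2 hx3 hxb hy2 hy3
      rw [descFun_T _ _ hx1, descFun_some _ _ hx2, descFun_some _ _ hx3, add_assoc,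
        ← hmul _ _ hx2 hx3, hxb]
      exact h2 _
    · intro x₁ y₁ x₂ y₂ x₃ y₃ h₁ h₂ h₃ l n hn hx1 hx2 hx3 hln
      rw [descFun_some _ _ hx1, descFun_some _ _ hx2, descFun_some _ _ hx3, ← hmul _ _ hx1 hx2,
        ← hmul _ _ (mul_ne_zero hx1 hx2) hx3, hln.2.2.2.2.2, pow_two, hmul _ _ hn hn]
      exact h2 _

theorem desc_some {M : Type*} [AddCommGroup M] (χ : ℚ → M)
    (hmul : ∀ x y, x ≠ 0 → y ≠ 0 → χ (x * y) = χ x + χ y) (h2 : ∀ m : M, m + m = 0)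
    {a b x y : ℚ} (hb : b ≠ 0) (h : (EC a b).Nonsingular x y) (hx : x ≠ 0) :
    desc χ hmul h2 a b hb (.some x y h) = χ x :=
  if_neg hx

theorem desc_T {M : Type*} [AddCommGroup M] (χ : ℚ → M)
    (hmul : ∀ x y, x ≠ 0 → y ≠ 0 → χ (x * y) = χ x + χ y) (h2 : ∀ m : M, m + m = 0)
    {a b x y : ℚ} (hb : b ≠ 0) (h : (EC a b).Nonsingular x y) (hx : x = 0) :
    desc χ hmul h2 a b hb (.some x y h) = χ b :=
  if_pos hx

/-- Points whose `x`-coordinate is a nonzero square lie in the image of the isogeny. -/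
theorem mem_range_of_sq {a b A B c : ℚ} (hc : c ≠ 0) (hb : b ≠ 0) (hA : A = -2 * a * c ^ 2)
    (hB : B = c ^ 4 * (a ^ 2 - 4 * b)) (hD : B * (A ^ 2 - 4 * B) ≠ 0)
    (hD' : b * (a ^ 2 - 4 * b) ≠ 0) {X Y w : ℚ} (h : (EC A B).Nonsingular X Y) (hw : w ≠ 0)
    (hX : X = w ^ 2) : .some X Y h ∈ (isog a b A B c hb hA hB hD).range := by
  have e := EC_eq_of h
  have hw2 : w / c ≠ 0 := div_ne_zero hw hc
  obtain ⟨m, hm⟩ : ∃ m, w / c = m := ⟨_, rfl⟩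
  obtain ⟨k, hk⟩ : ∃ k, Y / (c ^ 2 * w) = k := ⟨_, rfl⟩
  have hwm : w = m * c := by rw [← hm]; field_simp
  have hYk : Y = k * (c ^ 2 * w) := by rw [← hk]; field_simp
  rw [hm] at hw2
  subst hwm hYk hX hA hB
  have e2 : k ^ 2 = (m ^ 2 - a) ^ 2 - 4 * b := by
    have : (c ^ 6 * m ^ 2) * k ^ 2 = (c ^ 6 * m ^ 2) * ((m ^ 2 - a) ^ 2 - 4 * b) := by
      linear_combination e
    exact mul_left_cancel₀ (by positivity) this
  obtain ⟨x, hx⟩ : ∃ x, (m ^ 2 - a + k) / 2 = x := ⟨_, rfl⟩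
  have hkx : k = 2 * x - m ^ 2 + a := by rw [← hx]; ring
  have hbx : b = x * (m ^ 2 - a - x) := by
    rw [hkx] at e2
    linear_combination (1 / 4) * e2
  have hx0 : x ≠ 0 := by rintro rfl; apply hb; rw [hbx]; ring
  have hP : (EC a b).Nonsingular x (m * x) := EC_nonsing hD' (by rw [hbx]; ring)
  refine ⟨.some x (m * x) hP, ?_⟩
  obtain ⟨h', e'⟩ := isog_some hb rfl rfl hD hP hx0
  rw [e', Point.some.injEq, hkx]
  constructor
  · field_simp
  · rw [hbx]; field_simp; ring

theorem mem_range_of_T {a b A B c : ℚ} (hc : c ≠ 0) (hb : b ≠ 0) (hA : A = -2 * a * c ^ 2)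
    (hB : B = c ^ 4 * (a ^ 2 - 4 * b)) (hD : B * (A ^ 2 - 4 * B) ≠ 0)
    (hD' : b * (a ^ 2 - 4 * b) ≠ 0) {X Y w : ℚ} (h : (EC A B).Nonsingular X Y) (hX : X = 0)
    (hBw : B = w ^ 2) : .some X Y h ∈ (isog a b A B c hb hA hB hD).range := by
  have e := EC_eq_of h
  have hY : Y = 0 := by rw [hX] at e; simpa using e
  subst hX hY
  obtain ⟨x, hx⟩ : ∃ x, (w / c ^ 2 - a) / 2 = x := ⟨_, rfl⟩
  have hwx : w = (2 * x + a) * c ^ 2 := by rw [← hx]; field_simp; ring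
  have hbx : b = x * (- a - x) := by
    have : c ^ 4 * (a ^ 2 - 4 * b) = c ^ 4 * (2 * x + a) ^ 2 := by
      rw [← hB, hBw, hwx]; ring
    have := mul_left_cancel₀ (by positivity) this
    linear_combination (-1 / 4) * this
  have hx0 : x ≠ 0 := by rintro rfl; apply hb; rw [hbx]; ring
  have hP : (EC a b).Nonsingular x 0 := EC_nonsing hD' (by rw [hbx]; ring)
  refine ⟨.some x 0 hP, ?_⟩
  obtain ⟨h', e'⟩ := isog_some hb hA hB hD hP hx0
  rw [e', Point.some.injEq]
  constructor <;> simp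

/-- The combined parity-of-valuations and sign function. -/
noncomputable def chi (S : Finset ℕ) (q : ℚ) : (S → ZMod 2) × ZMod 2 :=
  (fun p => (padicValRat p q : ZMod 2), if q < 0 then 1 else 0)

theorem chi_mul (S : Finset ℕ) (hS : ∀ p ∈ S, p.Prime) (x y : ℚ) (hx : x ≠ 0) (hy : y ≠ 0) :
    chi S (x * y) = chi S x + chi S y := by
  refine Prod.ext ?_ ?_
  · funext p
    have : Fact (p : ℕ).Prime := ⟨hS p p.2⟩
    simp only [chi, Prod.fst_add, Pi.add_apply]
    rw [padicValRat.mul hx hy]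
    push_cast
    rfl
  · simp only [chi, Prod.snd_add]
    rcases lt_or_gt_of_ne hx with h1 | h1 <;> rcases lt_or_gt_of_ne hy with h2 | h2
    · rw [if_neg (mul_pos_of_neg_of_neg h1 h2).not_gt, if_pos h1, if_pos h2]; rfl
    · rw [if_pos (mul_neg_of_neg_of_pos h1 h2), if_pos h1, if_neg h2.not_gt]; rfl
    · rw [if_pos (mul_neg_of_pos_of_neg h1 h2), if_pos h2, if_neg h1.not_gt]; rfl
    · rw [if_neg (mul_pos h1 h2).not_gt, if_neg h1.not_gt, if_neg h2.not_gt]; rfl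

theorem chi_two (S : Finset ℕ) (m : (S → ZMod 2) × ZMod 2) : m + m = 0 := by
  refine Prod.ext ?_ ?_
  · funext p
    exact CharTwo.add_self_eq_zero _
  · exact CharTwo.add_self_eq_zero _

theorem chi_card (S : Finset ℕ) : Nat.card ((S → ZMod 2) × ZMod 2) = 2 ^ (S.card + 1) := by
  simp [pow_succ]

/-- Every nonzero rational is a squarefree integer times a square. -/
theorem exists_squarefree_mul_sq (x : ℚ) (hx : x ≠ 0) :
    ∃ (d : ℤ) (w : ℚ), d ≠ 0 ∧ w ≠ 0 ∧ Squarefree d ∧ x = d * w ^ 2 := by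
  have hN : x.num.natAbs * x.den ≠ 0 := by simp [hx]
  obtain ⟨s, t, hst, hs⟩ := Nat.sq_mul_squarefree (x.num.natAbs * x.den)
  have hs0 : s ≠ 0 := by rintro rfl; simp at hs
  have ht0 : t ≠ 0 := by rintro rfl; apply hN; rw [← hst]; simp
  have hden : (x.den : ℚ) ≠ 0 := by exact_mod_cast x.den_ne_zero
  have hsg : (x.num.sign : ℤ) * x.num.natAbs = x.num := Int.sign_mul_natAbs _
  have hsign : x.num.sign = 1 ∨ x.num.sign = -1 := by
    rcases lt_trichotomy x.num 0 with h | h | h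
    · right; exact Int.sign_eq_neg_one_of_neg h
    · simp at h; exact absurd h hx
    · left; exact Int.sign_eq_one_of_pos h
  refine ⟨x.num.sign * s, t / x.den, ?_, ?_, ?_, ?_⟩
  · rcases hsign with h | h <;> rw [h] <;> simpa using hs0
  · have : (t : ℚ) ≠ 0 := by exact_mod_cast ht0
    positivity
  · have h1 : Squarefree (s : ℤ) := Int.squarefree_natCast.2 hs
    rcases hsign with h | h <;> rw [h]
    · simpa using h1
    · rw [neg_one_mul, ← Int.squarefree_natAbs, Int.natAbs_neg, Int.squarefree_natAbs]; exact h1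
  · have h1 : ((t : ℚ) ^ 2 * s) = (x.num.natAbs : ℚ) * x.den := by exact_mod_cast hst
    have h2 : (x.num.sign : ℚ) * (x.num.natAbs : ℚ) = x.num := by
      rw [← Int.cast_natCast, ← Int.cast_mul, hsg]
    rw [Int.cast_mul, Int.cast_natCast]
    calc x = x.num / x.den := (Rat.num_div_den x).symm
      _ = (x.num.sign : ℚ) * ((x.num.natAbs : ℚ) * x.den) / x.den ^ 2 := by
        rw [← h2]; field_simp
      _ = _ := by rw [← h1]; field_simp

theorem odd_val_of_dvd {d : ℤ} {w x : ℚ} (hd0 : d ≠ 0) (hw : w ≠ 0) (hd : Squarefree d)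
    (hx : x = d * w ^ 2) (q : ℕ) (hq : q.Prime) :
    Odd (padicValRat q x) ↔ (q : ℤ) ∣ d := by
  have : Fact q.Prime := ⟨hq⟩
  have hd0' : (d : ℚ) ≠ 0 := by exact_mod_cast hd0
  rw [hx, padicValRat.mul hd0' (pow_ne_zero _ hw), padicValRat.pow, padicValRat.of_int]
  rw [Int.odd_add' ]
  have he : Even (((2 : ℕ) : ℤ) * padicValRat q w) := by simp
  have h1 : padicValInt q d ≤ 1 := by
    by_contra hcon
    have : ((q : ℤ) ^ 2) ∣ d := by
      rw [padicValInt_dvd_iff]; right; omega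
    have := hd q (by rwa [← pow_two])
    exact (Nat.prime_iff_prime_int.1 hq).not_unit this
  have h2 : (q : ℤ) ∣ d ↔ 1 ≤ padicValInt q d := by
    have := padicValInt_dvd_iff (p := q) 1 d
    rw [pow_one] at this
    rw [this]; simp [hd0]
  rw [h2]
  constructor
  · intro h
    by_contra hcon
    have h0 : padicValInt q d = 0 := by omega
    rw [h0] at h
    have := h.2 (by simp)
    exact (Int.not_odd_iff_even.2 he) this
  · intro h
    have h0 : padicValInt q d = 1 := by omega
    rw [h0]
    constructor
    · intro h'; exact absurd he (Int.not_even_iff_odd.2 h')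
    · intro h'; exact absurd h' (by decide)

theorem isSquare_of_vals {x : ℚ} (hx : 0 < x)
    (h : ∀ q : ℕ, q.Prime → Even (padicValRat q x)) : ∃ w, w ≠ 0 ∧ x = w ^ 2 := by
  obtain ⟨d, w, hd0, hw, hd, e⟩ := exists_squarefree_mul_sq x hx.ne'
  refine ⟨w, hw, ?_⟩
  have hdpos : 0 < d := by
    have : 0 < (d : ℚ) := by
      by_contra hcon
      push Not at hcon
      have := mul_nonpos_of_nonpos_of_nonneg hcon (sq_nonneg w)
      linarith
    exact_mod_cast this
  have hd1 : d.natAbs = 1 := by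
    by_contra hcon
    obtain ⟨q, hq, hqd⟩ := Nat.exists_prime_and_dvd hcon
    have := (odd_val_of_dvd hd0 hw hd e q hq).2 (Int.natCast_dvd.2 hqd)
    exact (Int.not_odd_iff_even.2 (h q hq)) this
  have : d = 1 := by omega
  rw [e, this]; simp

theorem val_add_of_lt {q : ℕ} (hq : q.Prime) {s t : ℚ} (hs : s ≠ 0)
    (h : t = 0 ∨ padicValRat q s < padicValRat q t) :
    s + t ≠ 0 ∧ padicValRat q (s + t) = padicValRat q s := by
  have : Fact q.Prime := ⟨hq⟩
  by_cases ht : t = 0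
  · subst ht; simpa using hs
  · have h := h.resolve_left ht
    have h0 : s + t ≠ 0 := by
      intro h0
      have : s = -t := by linarith
      rw [this, padicValRat.neg] at h
      exact lt_irrefl _ h
    exact ⟨h0, padicValRat.add_eq_of_lt h0 hs ht h⟩

theorem even_val_of_not_dvd {a b : ℤ} (hb : b ≠ 0) {x y : ℚ} (hx : x ≠ 0)
    (h : y ^ 2 = x ^ 3 + a * x ^ 2 + b * x) (q : ℕ) (hq : q.Prime) (hqb : ¬ (q : ℤ) ∣ b) :
    Even (padicValRat q x) := by
  have : Fact q.Prime := ⟨hq⟩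
  have hb0 : (b : ℚ) ≠ 0 := by exact_mod_cast hb
  have hvb : padicValRat q (b : ℚ) = 0 := by
    rw [padicValRat.of_int, padicValInt.eq_zero_of_not_dvd hqb]; rfl
  have hva : (a : ℚ) ≠ 0 → 0 ≤ padicValRat q (a : ℚ) := by
    intro _; rw [padicValRat.of_int]; positivity
  have hax : a * x = 0 ∨ padicValRat q x ≤ padicValRat q (a * x) := by
    by_cases ha : (a : ℚ) = 0
    · left; rw [ha, zero_mul]
    · right
      rw [padicValRat.mul ha hx]
      linarith [hva ha]
  have hx2 : padicValRat q (x ^ 2) = 2 * padicValRat q x := by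
    rw [padicValRat.pow]; rfl
  have hy2 : padicValRat q (y ^ 2) = 2 * padicValRat q y := by
    rw [padicValRat.pow]; rfl
  rcases lt_trichotomy (padicValRat q x) 0 with hv | hv | hv
  · obtain ⟨h1, e1⟩ := val_add_of_lt hq (s := x ^ 2) (t := a * x) (pow_ne_zero _ hx)
      (hax.imp_right fun h => by rw [hx2]; linarith)
    obtain ⟨h2, e2⟩ := val_add_of_lt hq (s := x ^ 2 + a * x) (t := b) h1
      (Or.inr (by rw [e1, hvb, hx2]; linarith))
    have e : y ^ 2 = x * (x ^ 2 + a * x + b) := by rw [h]; ring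
    rw [e, padicValRat.mul hx h2, e2, e1, hx2] at hy2
    exact ⟨padicValRat q y - padicValRat q x, by linarith⟩
  · rw [hv]; exact Even.zero
  · obtain ⟨h1, e1⟩ := val_add_of_lt hq (s := b) (t := a * x) hb0
      (hax.imp_right fun h => by rw [hvb]; linarith)
    obtain ⟨h2, e2⟩ := val_add_of_lt hq (s := b + a * x) (t := x ^ 2) h1
      (Or.inr (by rw [e1, hvb, hx2]; linarith))
    have e : y ^ 2 = x * (b + a * x + x ^ 2) := by rw [h]; ring
    rw [e, padicValRat.mul hx h2, e2, e1, hvb] at hy2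
    exact ⟨padicValRat q y, by linarith⟩

theorem index_bound {a b : ℚ} {A B : ℤ} {c : ℚ} (hc : c ≠ 0) (hb : b ≠ 0)
    (hA : (A : ℚ) = -2 * a * c ^ 2)
    (hB : (B : ℚ) = c ^ 4 * (a ^ 2 - 4 * b)) (hD : (B : ℚ) * ((A : ℚ) ^ 2 - 4 * B) ≠ 0)
    (hD' : b * (a ^ 2 - 4 * b) ≠ 0) (S : Finset ℕ) (hS : ∀ p ∈ S, p.Prime)
    (hev : ∀ q : ℕ, q.Prime → q ∉ S → Even (padicValRat q (B : ℚ)) ∧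
      ∀ x y : ℚ, x ≠ 0 → y ^ 2 = x ^ 3 + A * x ^ 2 + B * x → Even (padicValRat q x)) :
    (isog a b A B c hb hA hB hD).range.index ≤ 2 ^ (S.card + 1) ∧
      (isog a b A B c hb hA hB hD).range.index ≠ 0 := by
  have hB0 : (B : ℚ) ≠ 0 := left_ne_zero_of_mul hD
  let α := desc (chi S) (chi_mul S hS) (chi_two S) (A : ℚ) (B : ℚ) hB0
  have hchi : ∀ x : ℚ, x ≠ 0 → chi S x = 0 → (∀ q : ℕ, q.Prime → q ∉ S → Even (padicValRat q x)) →
      ∃ w, w ≠ 0 ∧ x = w ^ 2 := by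
    intro x hx h0 hq
    have h1 := congrArg Prod.fst h0
    have h2 := congrArg Prod.snd h0
    simp only [chi, Prod.fst_zero, Prod.snd_zero] at h1 h2
    refine isSquare_of_vals ?_ ?_
    · rcases lt_or_gt_of_ne hx with h | h
      · rw [if_pos h] at h2
        exact absurd h2 (by decide)
      · exact h
    · intro q hqp
      by_cases hqS : q ∈ S
      · have := congrFun h1 ⟨q, hqS⟩
        simp only [Pi.zero_apply] at this
        rw [ZMod.intCast_eq_zero_iff_even] at this
        exact this
      · exact hq q hqp hqS
  have hker : α.ker ≤ (isog a b A B c hb hA hB hD).range := by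
    intro P hP
    rw [AddMonoidHom.mem_ker] at hP
    rcases P with _ | ⟨x, y, h⟩
    · exact zero_mem _
    · by_cases hx : x = 0
      · have h1 : chi S (B : ℚ) = 0 := by rw [← hP]; exact (desc_T _ _ _ _ h hx).symm
        obtain ⟨w, hw, e⟩ := hchi _ hB0 h1 (fun q hq hqS => (hev q hq hqS).1)
        exact mem_range_of_T hc hb hA hB hD hD' h hx e
      · have h1 : chi S x = 0 := by rw [← hP]; exact (desc_some _ _ _ _ h hx).symm
        obtain ⟨w, hw, e⟩ := hchi _ hx h1 (fun q hq hqS => (hev q hq hqS).2 x y hx (EC_eq_of h))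
        exact mem_range_of_sq hc hb hA hB hD hD' h hw e
  have hi : α.ker.index ≤ 2 ^ (S.card + 1) := by
    rw [AddSubgroup.index_ker, ← chi_card]
    exact Nat.card_le_card_of_injective _ Subtype.val_injective
  have hi0 : α.ker.index ≠ 0 := by
    rw [AddSubgroup.index_ker]
    exact Nat.card_pos.ne'
  have hdvd := AddSubgroup.index_dvd_of_le hker
  exact ⟨(Nat.le_of_dvd (Nat.pos_of_ne_zero hi0) hdvd).trans hi,
    fun h => hi0 (by rw [h] at hdvd; exact Nat.eq_zero_of_zero_dvd hdvd)⟩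


theorem EC_addSubMap (a b s t u : ℚ) :
    (fun i => ((EC a b).addSubMap i).eval ![s, t, u]) =
      ![s ^ 2 - 2 * b * s * u + b ^ 2 * u ^ 2, 2 * t * s + 4 * a * s * u + 2 * b * t * u,
        t ^ 2 - 4 * s * u] := by
  funext i
  fin_cases i <;>
    simp [WeierstrassCurve.addSubMap, WeierstrassCurve.b₂, WeierstrassCurve.b₄,
      WeierstrassCurve.b₆, WeierstrassCurve.b₈, EC] <;> ring

theorem EC_add {a b x₁ y₁ x₂ y₂ : ℚ} (h₁ : (EC a b).Nonsingular x₁ y₁)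
    (h₂ : (EC a b).Nonsingular x₂ y₂) (hxy : ¬(x₁ = x₂ ∧ y₁ = -y₂)) :
    ∃ l x₃ y₃ h₃, Point.some x₁ y₁ h₁ + Point.some x₂ y₂ h₂ = Point.some x₃ y₃ h₃ ∧
      x₃ = l ^ 2 - a - x₁ - x₂ ∧ y₁ - y₂ = l * (x₁ - x₂) ∧
      l * (y₁ + y₂) = x₁ ^ 2 + x₁ * x₂ + x₂ ^ 2 + a * (x₁ + x₂) + b := by
  obtain ⟨l, hl, e1, e2⟩ := EC_slope_spec h₁ h₂ hxy
  have hxy' : ¬(x₁ = x₂ ∧ y₁ = (EC a b).negY x₂ y₂) := by rwa [EC_negY]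
  refine ⟨l, _, _, _, Point.add_some hxy', ?_, e1, e2⟩
  rw [hl]
  simp [Affine.addX, EC]

/-- The compatibility of the group law with the addition-and-subtraction map. -/
def AddSubRel {a b : ℚ} (P Q : (EC a b).Point) : Prop :=
  ∃ t : ℚ, t ≠ 0 ∧ (fun i => ((EC a b).addSubMap i).eval (P.sym2x Q)) =
    t • (P + Q).sym2x (P - Q)

theorem AddSubRel.neg {a b : ℚ} {P Q : (EC a b).Point} (h : AddSubRel P (-Q)) :
    AddSubRel P Q := by
  obtain ⟨t, ht, e⟩ := h
  refine ⟨t, ht, ?_⟩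
  rw [Point.sym2x_neg_right, sub_neg_eq_add, ← sub_eq_add_neg] at e
  rw [e, Point.sym2x_comm]

theorem AddSubRel.self {a b : ℚ} (P : (EC a b).Point) : AddSubRel P P := by
  rcases P with _ | ⟨x, y, h⟩
  · refine ⟨1, one_ne_zero, ?_⟩
    rw [← Point.zero_def, add_zero, sub_zero, Point.sym2x_zero_zero, EC_addSubMap]
    ext i; fin_cases i <;> simp
  · have e := EC_eq_of h
    have ns := EC_nonsing' h
    by_cases hy : y = 0
    · have h2 : Point.some x y h + Point.some x y h = 0 := by
        rw [Point.add_of_Y_eq rfl]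
        rw [EC_negY, hy, neg_zero]
      refine ⟨(x ^ 2 - b) ^ 2, ?_, ?_⟩
      · apply pow_ne_zero
        intro h0
        subst hy
        have hb : b = x ^ 2 := by linarith
        subst hb
        rcases ns with ns | ns
        · have h3 : x ^ 2 * (2 * x + a) = 0 := by linear_combination -e
          rcases mul_eq_zero.1 h3 with h3 | h3
          · have : x = 0 := by simpa using h3
            subst this; simp at ns
          · apply ns; linear_combination 2 * x * h3
        · exact ns rfl
      · rw [h2, sub_self, Point.sym2x_zero_zero, Point.sym2x_some_some, EC_addSubMap]
        ext i; fin_cases i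
        · simp; ring
        · simp; rw [hy] at e; linear_combination -4 * e
        · simp; ring
    · obtain ⟨l, x₃, y₃, h₃, e3, ex, -, el⟩ := EC_add h h (by
        rintro ⟨-, h0⟩; apply hy; linarith)
      refine ⟨4 * y ^ 2, by positivity, ?_⟩
      rw [e3, sub_self, Point.sym2x_some_zero, Point.sym2x_some_some, EC_addSubMap]
      ext i; fin_cases i
      · simp
        rw [ex]
        have e4 : l ^ 2 * (4 * y ^ 2) = (3 * x ^ 2 + 2 * a * x + b) ^ 2 := by
          linear_combination (l * (y + y) + (x ^ 2 + x * x + x ^ 2 + a * (x + x) + b)) * el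
        linear_combination -e4 + 4 * (a + 2 * x) * e
      · simp; linear_combination -4 * e
      · simp; ring

theorem addSubRel {a b : ℚ} (P Q : (EC a b).Point) : AddSubRel P Q := by
  by_cases hPQ : Q = P
  · rw [hPQ]; exact .self P
  by_cases hPQ' : Q = -P
  · apply AddSubRel.neg; rw [hPQ', neg_neg]; exact .self P
  rcases P with _ | ⟨x₁, y₁, h₁⟩
  · rcases Q with _ | ⟨x₂, y₂, h₂⟩
    · exact absurd rfl hPQ
    · refine ⟨1, one_ne_zero, ?_⟩
      rw [← Point.zero_def, zero_add, zero_sub, Point.sym2x_neg_right, Point.sym2x_zero_some,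
        Point.sym2x_some_some, EC_addSubMap]
      ext i; fin_cases i <;> simp <;> ring
  rcases Q with _ | ⟨x₂, y₂, h₂⟩
  · refine ⟨1, one_ne_zero, ?_⟩
    rw [← Point.zero_def, add_zero, sub_zero, Point.sym2x_some_zero,
      Point.sym2x_some_some, EC_addSubMap]
    ext i; fin_cases i <;> simp <;> ring
  have e1 := EC_eq_of h₁
  have e2 := EC_eq_of h₂
  have hx : x₁ ≠ x₂ := by
    rintro rfl
    have : (y₂ - y₁) * (y₂ + y₁) = 0 := by linear_combination e2 - e1
    rcases mul_eq_zero.1 this with h0 | h0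
    · apply hPQ; rw [Point.some.injEq]; exact ⟨rfl, by linarith⟩
    · apply hPQ'; rw [EC_neg h₁ (EC_nonsing_neg h₁), Point.some.injEq]; exact ⟨rfl, by linarith⟩
  have hx' : x₁ - x₂ ≠ 0 := sub_ne_zero.2 hx
  obtain ⟨l, x₃, y₃, h₃, e3, ex3, el, -⟩ := EC_add h₁ h₂ (fun h => hx h.1)
  obtain ⟨m, x₄, y₄, h₄, e4, ex4, em, -⟩ := EC_add h₁ (EC_nonsing_neg h₂) (fun h => hx h.1)
  rw [← EC_neg h₂ (EC_nonsing_neg h₂), ← sub_eq_add_neg] at e4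
  refine ⟨(x₁ - x₂) ^ 2, pow_ne_zero _ hx', ?_⟩
  rw [e3, e4, Point.sym2x_some_some, Point.sym2x_some_some, EC_addSubMap]
  obtain ⟨k, hk⟩ : ∃ k, k = (x₁ - x₂) ^ 2 * (a + x₁ + x₂) := ⟨_, rfl⟩
  have f3 : (x₁ - x₂) ^ 2 * x₃ = (y₁ - y₂) ^ 2 - k := by rw [ex3, el, hk]; ring
  have f4 : (x₁ - x₂) ^ 2 * x₄ = (y₁ + y₂) ^ 2 - k := by
    rw [ex4, show y₁ + y₂ = m * (x₁ - x₂) by linarith, hk]; ring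
  ext i; fin_cases i
  · simp
    apply mul_left_cancel₀ (pow_ne_zero 2 hx')
    have : (x₁ - x₂) ^ 2 * ((x₁ - x₂) ^ 2 * (x₃ * x₄)) =
        (y₁ ^ 2 - y₂ ^ 2) ^ 2 - 2 * k * (y₁ ^ 2 + y₂ ^ 2) + k ^ 2 := by
      linear_combination (x₁ - x₂) ^ 2 * x₄ * f3 + ((y₁ - y₂) ^ 2 - k) * f4
    rw [this, e1, e2, hk]; ring
  · simp
    have : (x₁ - x₂) ^ 2 * (x₃ + x₄) = 2 * (y₁ ^ 2 + y₂ ^ 2) - 2 * k := by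
      linear_combination f3 + f4
    rw [this, e1, e2, hk]; ring
  · simp; ring

/-- The naive height on the curve. -/
noncomputable def ht {a b : ℚ} (P : (EC a b).Point) : ℝ := Height.logHeight P.xRep

theorem xRep_ne_zero {a b : ℚ} (P : (EC a b).Point) : ![P.xRep 0, P.xRep 1] ≠ 0 := by
  cases P <;> simp [Point.xRep]

theorem xRep_eta {a b : ℚ} (P : (EC a b).Point) : ![P.xRep 0, P.xRep 1] = P.xRep := by
  ext i; fin_cases i <;> rfl

theorem ht_parallelogram {a b : ℚ} (hD : b * (a ^ 2 - 4 * b) ≠ 0) :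
    ∃ C : ℝ, ∀ P Q : (EC a b).Point, |ht (P + Q) + ht (P - Q) - 2 * (ht P + ht Q)| ≤ C := by
  have : (EC a b).IsElliptic := by
    refine ⟨?_⟩
    rw [EC_delta, isUnit_iff_ne_zero]
    have h1 := left_ne_zero_of_mul hD
    have h2 := right_ne_zero_of_mul hD
    positivity
  obtain ⟨C₁, hC₁⟩ := WeierstrassCurve.abs_logHeight_addSubMap_sub_two_mul_logHeight_le (EC a b)
  obtain ⟨C₂, hC₂⟩ := Height.abs_logHeight_sym2_sub_le ℚ
  have key : ∀ P Q : (EC a b).Point, |Height.logHeight (P.sym2x Q) - (ht P + ht Q)| ≤ C₂ := by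
    intro P Q
    have := hC₂ (xRep_ne_zero P) (xRep_ne_zero Q)
    rw [xRep_eta, xRep_eta] at this
    exact this
  refine ⟨C₁ + 3 * C₂, fun P Q => ?_⟩
  obtain ⟨t, ht0, e⟩ := addSubRel P Q
  have h1 := hC₁ (P.sym2x Q)
  rw [e, Height.logHeight_smul_eq_logHeight _ ht0] at h1
  have h2 := key P Q
  have h3 := key (P + Q) (P - Q)
  rw [abs_le] at *
  constructor <;> linarith [h1.1, h1.2, h2.1, h2.2, h3.1, h3.2]

theorem ht_northcott (a b : ℚ) : Northcott (ht (a := a) (b := b)) := by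
  refine ⟨fun B => ?_⟩
  have hfin := NumberField.finite_setOfPred_logHeight₁_le (K := ℚ) B
  have hpairs : {z : ℚ × ℚ | z.1 ∈ {x : ℚ | Height.logHeight₁ x ≤ B} ∧
      z.2 ^ 2 = z.1 ^ 3 + a * z.1 ^ 2 + b * z.1}.Finite := by
    have : {z : ℚ × ℚ | z.1 ∈ {x : ℚ | Height.logHeight₁ x ≤ B} ∧
      z.2 ^ 2 = z.1 ^ 3 + a * z.1 ^ 2 + b * z.1} ⊆
        ⋃ x ∈ {x : ℚ | Height.logHeight₁ x ≤ B},
          Set.image (Prod.mk x) {y : ℚ | y ^ 2 = x ^ 3 + a * x ^ 2 + b * x} := by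
      rintro ⟨x, y⟩ ⟨h1, h2⟩
      simp only [Set.mem_iUnion]
      exact ⟨x, h1, y, h2, rfl⟩
    refine (Set.Finite.biUnion hfin fun x _ => Set.Finite.image _ ?_).subset this
    by_cases hne : ∃ y₀ : ℚ, y₀ ^ 2 = x ^ 3 + a * x ^ 2 + b * x
    · obtain ⟨y₀, h0⟩ := hne
      refine (Set.toFinite {y₀, -y₀}).subset fun y hy => ?_
      have hy' : y ^ 2 = y₀ ^ 2 := by rw [h0]; exact hy
      exact sq_eq_sq_iff_eq_or_eq_neg.1 hy'
    · convert Set.finite_empty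
      ext y
      simp only [Set.mem_setOf_eq, Set.mem_empty_iff_false, iff_false]
      exact fun h => hne ⟨y, h⟩
  let f : (EC a b).Point → Option (ℚ × ℚ) := fun P =>
    match P with
    | .zero => none
    | .some x y _ => Option.some (x, y)
  have hf : Function.Injective f := by
    intro P Q h
    rcases P with _ | ⟨x, y, h1⟩ <;> rcases Q with _ | ⟨x', y', h2⟩
    · rfl
    · simp [f] at h
    · simp [f] at h
    · simp [f] at h
      rw [Point.some.injEq]; exact h
  refine Set.Finite.of_finite_image (f := f) ?_ hf.injOn
  refine ((hpairs.image Option.some).insert none).subset ?_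
  rintro _ ⟨P, hP, rfl⟩
  rcases P with _ | ⟨x, y, h⟩
  · left; rfl
  · right
    refine ⟨(x, y), ⟨?_, EC_eq_of h⟩, rfl⟩
    have : ht (Point.some x y h) ≤ B := hP
    simp only [Set.mem_setOf_eq, Height.logHeight₁_eq_logHeight]
    exact this

theorem EC_fg {a b : ℚ} (hD : b * (a ^ 2 - 4 * b) ≠ 0)
    (hfi : (nsmulAddMonoidHom (α := (EC a b).Point) 2).range.FiniteIndex) :
    AddGroup.FG (EC a b).Point := by
  obtain ⟨C, hC⟩ := ht_parallelogram hD
  have := ht_northcott a b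
  exact AddCommGroup.fg_of_descent' (h := ht) hfi (fun P => Height.logHeight_nonneg _) hC


theorem not_noLocal {a b d : ℤ} (hd0 : d ≠ 0) (hd : d ∣ a ^ 2 - 4 * b) {z u v : ℚ}
    (huv : u ≠ 0 ∨ v ≠ 0)
    (h : z ^ 2 = d * u ^ 4 - 2 * a * u ^ 2 * v ^ 2 + ((a : ℚ) ^ 2 - 4 * b) / d * v ^ 4)
    (ℓ : ℕ) (hℓ : ℓ.Prime) : ¬ NoLocalSolution ℓ hℓ a b d := by
  have : Fact ℓ.Prime := ⟨hℓ⟩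
  intro hno
  apply hno
  refine ⟨(z : ℚ_[ℓ]), (u : ℚ_[ℓ]), (v : ℚ_[ℓ]), ?_, ?_⟩
  · intro h0
    rw [Prod.mk.injEq] at h0
    have h1 : u = 0 := by exact_mod_cast h0.1
    have h2 : v = 0 := by exact_mod_cast h0.2
    rcases huv with h | h
    · exact h h1
    · exact h h2
  · have hd0' : (d : ℚ) ≠ 0 := by exact_mod_cast hd0
    have e : (((a ^ 2 - 4 * b) / d : ℤ) : ℚ) = ((a : ℚ) ^ 2 - 4 * b) / d := by
      rw [Int.cast_div hd hd0']
      push_cast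
      rfl
    rw [← e] at h
    have h' := congrArg (fun r : ℚ => (r : ℚ_[ℓ])) h
    simp only [Rat.cast_pow, Rat.cast_add, Rat.cast_sub, Rat.cast_mul, Rat.cast_intCast,
      Rat.cast_ofNat] at h'
    exact h'

theorem even_of_local {a b : ℤ} {p : ℕ} (hp : p.Prime)
    (hloc : ∀ d : ℤ, d ≠ 0 → Squarefree d → (p : ℤ) ∣ d →
      (∀ q : ℕ, q.Prime → (q : ℤ) ∣ d → (q : ℤ) ∣ a ^ 2 - 4 * b) →
      ∃ ℓ : ℕ, ∃ hℓ : ℓ.Prime, (ℓ : ℤ) ∣ 2 * b * (a ^ 2 - 4 * b) ∧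
        NoLocalSolution ℓ hℓ a b d) {x : ℚ} (hx : x ≠ 0)
    (h1 : ∀ q : ℕ, q.Prime → ¬ (q : ℤ) ∣ a ^ 2 - 4 * b → Even (padicValRat q x))
    (h2 : ∀ (d : ℤ) (w : ℚ), d ≠ 0 → w ≠ 0 → x = d * w ^ 2 → ∃ z u v : ℚ, (u ≠ 0 ∨ v ≠ 0) ∧
      z ^ 2 = d * u ^ 4 - 2 * a * u ^ 2 * v ^ 2 + ((a : ℚ) ^ 2 - 4 * b) / d * v ^ 4) :
    Even (padicValRat p x) := by
  by_contra hcon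
  rw [Int.not_even_iff_odd] at hcon
  obtain ⟨d, w, hd0, hw, hd, e⟩ := exists_squarefree_mul_sq x hx
  have hall : ∀ q : ℕ, q.Prime → (q : ℤ) ∣ d → (q : ℤ) ∣ a ^ 2 - 4 * b := by
    intro q hq hqd
    by_contra hn
    have := (odd_val_of_dvd hd0 hw hd e q hq).2 hqd
    exact (Int.not_odd_iff_even.2 (h1 q hq hn)) this
  obtain ⟨ℓ, hℓ, -, hno⟩ := hloc d hd0 hd ((odd_val_of_dvd hd0 hw hd e p hp).1 hcon) hall
  obtain ⟨z, u, v, huv, hz⟩ := h2 d w hd0 hw e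
  have hdvd : d ∣ a ^ 2 - 4 * b := by
    rw [← Int.natAbs_dvd_natAbs]
    by_cases hB : a ^ 2 - 4 * b = 0
    · rw [hB]; simp
    have hsq : Squarefree d.natAbs := Int.squarefree_natAbs.2 hd
    rw [← Nat.prod_primeFactors_of_squarefree hsq]
    refine (Finset.prod_dvd_prod_of_subset _ (a ^ 2 - 4 * b).natAbs.primeFactors _ ?_).trans
      (Nat.prod_primeFactors_dvd _)
    intro q hq
    have hq' := Nat.prime_of_mem_primeFactors hq
    rw [Nat.mem_primeFactors]
    refine ⟨hq', Int.natCast_dvd.1 (hall q hq' (Int.natCast_dvd.2 ?_)), by simpa using hB⟩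
    exact Nat.dvd_of_mem_primeFactors hq
  exact not_noLocal hd0 hdvd huv hz ℓ hℓ hno

theorem val_even_int {B : ℤ} (q : ℕ) (h : ¬ (q : ℤ) ∣ B) : Even (padicValRat q (B : ℚ)) := by
  rw [padicValRat.of_int, padicValInt.eq_zero_of_not_dvd h]; exact Even.zero

theorem not_dvd_of_not_mem {B : ℤ} (hB : B ≠ 0) {q : ℕ} (hq : q.Prime)
    (h : q ∉ B.natAbs.primeFactors) : ¬ (q : ℤ) ∣ B := by
  intro hd
  apply h
  rw [Nat.mem_primeFactors]
  exact ⟨hq, Int.natCast_dvd.1 hd, by simpa using hB⟩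

theorem rank_bound_aux (a b : ℤ)
    (hnz : b * (a ^ 2 - 4 * b) ≠ 0) (p : ℕ) (hp : p.Prime) (hpd : (p : ℤ) ∣ a ^ 2 - 4 * b)
    (hloc : ∀ d : ℤ, d ≠ 0 → Squarefree d → (p : ℤ) ∣ d →
      (∀ q : ℕ, q.Prime → (q : ℤ) ∣ d → (q : ℤ) ∣ a ^ 2 - 4 * b) →
      ∃ ℓ : ℕ, ∃ hℓ : ℓ.Prime, (ℓ : ℤ) ∣ 2 * b * (a ^ 2 - 4 * b) ∧
        NoLocalSolution ℓ hℓ a b d) :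
    Module.rank ℚ (ℚ ⊗[ℤ] (EC (a : ℚ) (b : ℚ)).Point) ≤
      ((omega (a ^ 2 - 4 * b) + omega b - 1 : ℕ) : Cardinal) := by
  obtain ⟨A, hAdef⟩ : ∃ A : ℤ, A = -2 * a := ⟨_, rfl⟩
  obtain ⟨B, hBdef⟩ : ∃ B : ℤ, B = a ^ 2 - 4 * b := ⟨_, rfl⟩
  have hbZ : b ≠ 0 := left_ne_zero_of_mul hnz
  have hBZ : B ≠ 0 := hBdef ▸ right_ne_zero_of_mul hnz
  have hb : (b : ℚ) ≠ 0 := by exact_mod_cast hbZ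
  have hB' : (B : ℚ) ≠ 0 := by exact_mod_cast hBZ
  have hAq : (A : ℚ) = -2 * a := by rw [hAdef]; push_cast; ring
  have hBq : (B : ℚ) = (a : ℚ) ^ 2 - 4 * b := by rw [hBdef]; push_cast; ring
  have hA : (A : ℚ) = -2 * a * 1 ^ 2 := by rw [hAq]; ring
  have hB : (B : ℚ) = 1 ^ 4 * ((a : ℚ) ^ 2 - 4 * b) := by rw [hBq]; ring
  have ha2 : (a : ℚ) = -2 * A * (1 / 2) ^ 2 := by rw [hAq]; ring
  have hb2 : (b : ℚ) = (1 / 2) ^ 4 * ((A : ℚ) ^ 2 - 4 * B) := by rw [hAq, hBq]; ring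
  have hD' : (b : ℚ) * ((a : ℚ) ^ 2 - 4 * b) ≠ 0 := by rw [← hBq]; exact mul_ne_zero hb hB'
  have hD : (B : ℚ) * ((A : ℚ) ^ 2 - 4 * B) ≠ 0 := by
    have : (A : ℚ) ^ 2 - 4 * B = 16 * b := by rw [hAq, hBq]; ring
    rw [this]; positivity
  have hψ := index_bound (a := A) (b := B) (A := a) (B := b) (c := 1 / 2) (by norm_num) hB' ha2 hb2
    hD' hD b.natAbs.primeFactors (fun q hq => Nat.prime_of_mem_primeFactors hq) (by
      intro q hq hqS
      have hqb := not_dvd_of_not_mem hbZ hq hqS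
      exact ⟨val_even_int q hqb, fun x y hx h => even_val_of_not_dvd hbZ hx h q hq hqb⟩)
  have hφ := index_bound (a := a) (b := b) (A := A) (B := B) (c := 1) one_ne_zero hb hA hB
    hD hD' (B.natAbs.primeFactors.erase p)
    (fun q hq => Nat.prime_of_mem_primeFactors (Finset.mem_of_mem_erase hq)) (by
      intro q hq hqS
      by_cases hqp : q = p
      · subst hqp
        constructor
        · refine even_of_local hq hloc hB' (fun r hr hrB => val_even_int r (hBdef ▸ hrB)) ?_
          intro d w hd0 hw e
          have hd0' : (d : ℚ) ≠ 0 := by exact_mod_cast hd0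
          refine ⟨w, 0, 1, Or.inr one_ne_zero, ?_⟩
          rw [← hBq, e]
          field_simp
          ring
        · intro x y hx h
          refine even_of_local hq hloc hx
            (fun r hr hrB => even_val_of_not_dvd hBZ hx h r hr (hBdef ▸ hrB)) ?_
          intro d w hd0 hw e
          have hd0' : (d : ℚ) ≠ 0 := by exact_mod_cast hd0
          refine ⟨y / (d * w), w, 1, Or.inr one_ne_zero, ?_⟩
          rw [← hBq, div_pow, h, hAq, e]
          field_simp
          ring
      · have hqB : ¬ (q : ℤ) ∣ B :=
          not_dvd_of_not_mem hBZ hq (fun h => hqS (Finset.mem_erase.2 ⟨hqp, h⟩))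
        exact ⟨val_even_int q hqB, fun x y hx h => even_val_of_not_dvd hBZ hx h q hq hqB⟩)
  have hcomp := isog_isog hb hA hB hD hB' ha2 hb2 hD'
  have hfi : (nsmulAddMonoidHom (α := (EC (a : ℚ) (b : ℚ)).Point) 2).range.FiniteIndex := by
    refine ⟨?_⟩
    rw [aux_index_formula _ _ hcomp]
    refine mul_ne_zero ?_ hψ.2
    intro h0
    have := AddSubgroup.index_dvd_of_le
      (le_sup_left : (isog (a : ℚ) b A B 1 hb hA hB hD).range ≤ _ ⊔
        (isog (A : ℚ) B a b (1 / 2) hB' ha2 hb2 hD').ker)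
    rw [h0] at this
    exact hφ.2 (Nat.eq_zero_of_zero_dvd this)
  have hfg : AddGroup.FG (EC (a : ℚ) (b : ℚ)).Point := EC_fg hD' hfi
  have hpS : p ∈ B.natAbs.primeFactors := by
    rw [Nat.mem_primeFactors]
    exact ⟨hp, Int.natCast_dvd.1 (hBdef ▸ hpd), by simpa using hBZ⟩
  have hcard := Finset.card_erase_add_one hpS
  have := aux_rank _ _ hcomp (isog_ker_card hb hA hB hD hD') (isog_ker_card hB' ha2 hb2 hD' hD)
    _ _ hψ.1 hφ.1
  rw [hcard] at this
  refine this.trans ?_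
  rw [← hBdef]
  unfold omega
  norm_cast
  omega

end MWDescent

theorem rank_bound_of_local_insolubility (a b : ℤ) (hab : IsCoprime a b)
    (hnz : b * (a ^ 2 - 4 * b) ≠ 0) (p : ℕ) (hp : p.Prime) (hpd : (p : ℤ) ∣ a ^ 2 - 4 * b)
    (hloc : ∀ d : ℤ, d ≠ 0 → Squarefree d → (p : ℤ) ∣ d →
      (∀ q : ℕ, q.Prime → (q : ℤ) ∣ d → (q : ℤ) ∣ a ^ 2 - 4 * b) →
      ∃ ℓ : ℕ, ∃ hℓ : ℓ.Prime, (ℓ : ℤ) ∣ 2 * b * (a ^ 2 - 4 * b) ∧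
        NoLocalSolution ℓ hℓ a b d) :
    mwRank (Eab a b) ≤ ((omega (a ^ 2 - 4 * b) + omega b - 1 : ℕ) : Cardinal) :=
  MWDescent.rank_bound_aux a b hnz p hp hpd hloc
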